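/- For every positive integer n and every Ferrers board F in F_n, the number of 213-avoiding perfect matchings of shape F equals the number of Dyck paths of semilength n that lie weakly below the border path D_F of F. (In the paper this is realized by an explicit bijection Δ_213 : M_F(213) → D²_F.) -/

import Mathlib

/-! ### Patterns of length 3 and 4 as permutations (0-indexed values) -/

def p123 : Equiv.Perm (Fin 3) :=
  ⟨![0,1,2], ![0,1,2], by intro x; fin_cases x <;> rfl, by intro x; fin_cases x <;> rfl⟩
def p132 : Equiv.Perm (Fin 3) :=
  ⟨![0,2,1], ![0,2,1], by intro x; fin_cases x <;> rfl, by intro x; fin_cases x <;> rfl⟩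
def p213 : Equiv.Perm (Fin 3) :=
  ⟨![1,0,2], ![1,0,2], by intro x; fin_cases x <;> rfl, by intro x; fin_cases x <;> rfl⟩
def p231 : Equiv.Perm (Fin 3) :=
  ⟨![1,2,0], ![2,0,1], by intro x; fin_cases x <;> rfl, by intro x; fin_cases x <;> rfl⟩
def p312 : Equiv.Perm (Fin 3) :=
  ⟨![2,0,1], ![1,2,0], by intro x; fin_cases x <;> rfl, by intro x; fin_cases x <;> rfl⟩
def p321 : Equiv.Perm (Fin 3) :=
  ⟨![2,1,0], ![2,1,0], by intro x; fin_cases x <;> rfl, by intro x; fin_cases x <;> rfl⟩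
def p1342 : Equiv.Perm (Fin 4) :=
  ⟨![0,2,3,1], ![0,3,1,2], by intro x; fin_cases x <;> rfl, by intro x; fin_cases x <;> rfl⟩
def p1324 : Equiv.Perm (Fin 4) :=
  ⟨![0,2,1,3], ![0,2,1,3], by intro x; fin_cases x <;> rfl, by intro x; fin_cases x <;> rfl⟩

/-! ### Perfect matchings of `[2n] = {1, …, 2n}` as finsets of pairs `(i,j)`, `i < j` -/

/-- `M` is a perfect matching of `{1, …, 2n}`. -/
def IsPerfectMatching (n : ℕ) (M : Finset (ℕ × ℕ)) : Prop :=
  (∀ p ∈ M, p.1 < p.2 ∧ 1 ≤ p.1 ∧ p.2 ≤ 2 * n) ∧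
  ∀ x, 1 ≤ x → x ≤ 2 * n → ∃! p, p ∈ M ∧ (p.1 = x ∨ p.2 = x)

/-- The matching `M` contains the pattern `τ ∈ S_k`: there are
`i_1 < i_2 < ⋯ < i_{2k}` with `(i_a, i_{2k+1-τ(a)}) ∈ M` for all `1 ≤ a ≤ k`
(written here 0-indexed). -/
def MatchContains {k : ℕ} (τ : Equiv.Perm (Fin k)) (M : Finset (ℕ × ℕ)) : Prop :=
  ∃ f : Fin (2 * k) → ℕ, StrictMono f ∧
    ∀ a : Fin k,
      (f ⟨a.1, by have := a.isLt; omega⟩,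
       f ⟨2 * k - 1 - (τ a).1, by have := (τ a).isLt; omega⟩) ∈ M

def MatchAvoids {k : ℕ} (τ : Equiv.Perm (Fin k)) (M : Finset (ℕ × ℕ)) : Prop :=
  ¬ MatchContains τ M

/-! ### Dyck paths as lists of booleans (`true` = east step, `false` = south step) -/

/-- A Dyck path of semilength `n`, from `(0,n)` to `(n,0)`, staying weakly above `y = n - x`. -/
def IsDyckPath (n : ℕ) (t : List Bool) : Prop :=
  t.length = 2 * n ∧ t.count true = n ∧
  ∀ i, (t.take i).count false ≤ (t.take i).count true

/-- The height (distance above the diagonal) of the `i`-th vertex of the path `t`. -/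
def pathHeight (t : List Bool) (i : ℕ) : ℤ :=
  ((t.take i).count true : ℤ) - ((t.take i).count false : ℤ)

/-- `s` lies weakly below `t` (for paths of the same semilength). -/
def WeaklyBelow (s t : List Bool) : Prop := ∀ i, pathHeight s i ≤ pathHeight t i

/-- The shape of a matching of `[2n]`: an east step for each opener, a south step for
each closer. -/
def shapeOf (n : ℕ) (M : Finset (ℕ × ℕ)) : List Bool :=
  (List.range (2 * n)).map fun x => decide ((x + 1) ∈ M.image Prod.fst)

/-- Number of returns of a path: south steps ending on the diagonal. -/
def returnsOf (t : List Bool) : ℕ :=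
  ((Finset.range t.length).filter fun i =>
    t[i]? = some false ∧ (t.take (i+1)).count true = (t.take (i+1)).count false).card

/-- Height sequence of a path, as natural numbers. -/
def hseq (t : List Bool) (i : ℕ) : ℕ := (t.take i).count true - (t.take i).count false

/-- `η(F)`: the number of indices `0 ≤ i ≤ 2n` with `h_i = 2`. -/
def etaOf (n : ℕ) (t : List Bool) : ℕ :=
  ((Finset.range (2 * n + 1)).filter fun i => hseq t i = 2).card

/-! ### Full rook placements on Ferrers boards -/

/-- The square in column `c`, row `r` (both 1-indexed from the bottom left) belongs to the
Ferrers board with border path `t ∈ F_n`. -/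
def InBoard (n : ℕ) (t : List Bool) (c r : ℕ) : Prop :=
  1 ≤ c ∧ 1 ≤ r ∧ ∃ i, c ≤ (t.take i).count true ∧ (t.take i).count false + r ≤ n

/-- `R` is a full rook placement on the Ferrers board with border path `t ∈ F_n`:
one rook in each of the `n` rows and `n` columns. -/
def IsFullRookPlacement (n : ℕ) (t : List Bool) (R : Finset (ℕ × ℕ)) : Prop :=
  (∀ p ∈ R, InBoard n t p.1 p.2) ∧
  (∀ c, 1 ≤ c → c ≤ n → ∃! p, p ∈ R ∧ p.1 = c) ∧
  (∀ r, 1 ≤ r → r ≤ n → ∃! p, p ∈ R ∧ p.2 = r)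

/-- The rooks of `R` lying in the rectangle `Γ(V_i)` determined by the `i`-th border vertex. -/
def rectRooks (n : ℕ) (t : List Bool) (R : Finset (ℕ × ℕ)) (i : ℕ) : Finset (ℕ × ℕ) :=
  R.filter fun p => p.1 ≤ (t.take i).count true ∧ p.2 + (t.take i).count false ≤ n

/-- Length of the longest increasing sequence (in both coordinates) in a finite point set. -/
def lisLen (S : Finset (ℕ × ℕ)) : ℕ :=
  (S.powerset.filter fun T => ∀ p ∈ T, ∀ q ∈ T, p.1 < q.1 → p.2 < q.2).sup Finset.card

/-- The full rook placement `R` on the board with border `t ∈ F_n` contains the pattern `τ`: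
some rectangle `Γ(V_i)` contains an occurrence of `τ`. -/
def PlacementContains {k : ℕ} (τ : Equiv.Perm (Fin k)) (n : ℕ) (t : List Bool)
    (R : Finset (ℕ × ℕ)) : Prop :=
  ∃ i ≤ 2 * n, ∃ f : Fin k → ℕ × ℕ,
    (∀ a, f a ∈ R ∧ (f a).1 ≤ (t.take i).count true ∧ (f a).2 + (t.take i).count false ≤ n) ∧
    (∀ a b : Fin k, a < b → (f a).1 < (f b).1) ∧
    (∀ a b : Fin k, τ a < τ b → (f a).2 < (f b).2)

def PlacementAvoids {k : ℕ} (τ : Equiv.Perm (Fin k)) (n : ℕ) (t : List Bool)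
    (R : Finset (ℕ × ℕ)) : Prop :=
  ¬ PlacementContains τ n t R

/-- `R` is board-minimal on the board with border `t`: every peak corner square holds a rook. -/
def BoardMinimal (n : ℕ) (t : List Bool) (R : Finset (ℕ × ℕ)) : Prop :=
  ∀ i, t[i]? = some true → t[i+1]? = some false →
    ((t.take (i+1)).count true, n - (t.take (i+1)).count false) ∈ R

/-- Board-minimal full rook placements on boards of `F_n` avoiding the pattern `σ`,
recorded as pairs (border path, rook set). -/
def MinPlacements (n : ℕ) {k : ℕ} (σ : Equiv.Perm (Fin k)) :
    Set (List Bool × Finset (ℕ × ℕ)) :=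
  {tR | IsDyckPath n tR.1 ∧ IsFullRookPlacement n tR.1 tR.2 ∧ BoardMinimal n tR.1 tR.2 ∧
        PlacementAvoids σ n tR.1 tR.2}

/-! ### Pattern avoidance in permutations -/

def PermContains {n k : ℕ} (τ : Equiv.Perm (Fin k)) (π : Equiv.Perm (Fin n)) : Prop :=
  ∃ f : Fin k → Fin n, StrictMono f ∧ ∀ a b : Fin k, τ a < τ b → π (f a) < π (f b)

def PermAvoids {n k : ℕ} (τ : Equiv.Perm (Fin k)) (π : Equiv.Perm (Fin n)) : Prop :=
  ¬ PermContains τ π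

/-- The full rook placement associated to a permutation of `[n]`. -/
def permPlacement {n : ℕ} (π : Equiv.Perm (Fin n)) : Finset (ℕ × ℕ) :=
  Finset.univ.image fun i : Fin n => ((i : ℕ) + 1, (π i : ℕ) + 1)

/-! ### Matchings with fixed points -/

/-- A (not necessarily perfect) matching on `{1, …, m}`: pairwise disjoint pairs. -/
def IsPartialMatching (m : ℕ) (M : Finset (ℕ × ℕ)) : Prop :=
  (∀ p ∈ M, p.1 < p.2 ∧ 1 ≤ p.1 ∧ p.2 ≤ m) ∧
  ∀ p ∈ M, ∀ q ∈ M, p ≠ q → p.1 ≠ q.1 ∧ p.1 ≠ q.2 ∧ p.2 ≠ q.1 ∧ p.2 ≠ q.2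

/-- The fixed points (unmatched vertices) of a matching on `{1, …, m}`. -/
def fixedPts (m : ℕ) (M : Finset (ℕ × ℕ)) : Finset ℕ :=
  (Finset.Icc 1 m).filter fun x => ∀ p ∈ M, p.1 ≠ x ∧ p.2 ≠ x

/-- The matched vertices of a matching on `{1, …, m}`. -/
def matchedSet (m : ℕ) (M : Finset (ℕ × ℕ)) : Finset ℕ :=
  (Finset.Icc 1 m).filter fun x => ∃ p ∈ M, p.1 = x ∨ p.2 = x

/-- The rank (1-based) of `x` inside the finset `S`. -/
def rankIn (S : Finset ℕ) (x : ℕ) : ℕ := (S.filter (· ≤ x)).card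

/-- The matching obtained by removing the fixed points and relabeling increasingly. -/
def relabeled (m : ℕ) (M : Finset (ℕ × ℕ)) : Finset (ℕ × ℕ) :=
  M.image fun p => (rankIn (matchedSet m M) p.1, rankIn (matchedSet m M) p.2)

/-! ### Set partitions -/

/-- `(i,j)` is an arc of the set partition `P` of `{1, …, n}`: `i < j` lie in a common block
with no element of that block strictly between them. -/
def PartArc {n : ℕ} (P : Finpartition (Finset.Icc 1 n)) (i j : ℕ) : Prop :=
  i < j ∧ ∃ B ∈ P.parts, i ∈ B ∧ j ∈ B ∧ ∀ x ∈ B, ¬(i < x ∧ x < j)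

/-- The set partition `P` contains the pattern `τ ∈ S_k`. -/
def PartContains {k n : ℕ} (τ : Equiv.Perm (Fin k)) (P : Finpartition (Finset.Icc 1 n)) : Prop :=
  ∃ f : Fin (2 * k) → ℕ, StrictMono f ∧
    ∀ a : Fin k,
      PartArc P (f ⟨a.1, by have := a.isLt; omega⟩)
        (f ⟨2 * k - 1 - (τ a).1, by have := (τ a).isLt; omega⟩)

def PartAvoids {k n : ℕ} (τ : Equiv.Perm (Fin k)) (P : Finpartition (Finset.Icc 1 n)) : Prop :=
  ¬ PartContains τ P

/-! ### Counting functions -/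

/-- `|M_n(τ)|`: the number of `τ`-avoiding perfect matchings of `[2n]`. -/
noncomputable def mcount {k : ℕ} (τ : Equiv.Perm (Fin k)) (n : ℕ) : ℕ :=
  {M : Finset (ℕ × ℕ) | IsPerfectMatching n M ∧ MatchAvoids τ M}.ncard

/-- `|M_n(σ,τ)|`: the number of perfect matchings of `[2n]` avoiding both `σ` and `τ`. -/
noncomputable def mcount2 {k : ℕ} (σ τ : Equiv.Perm (Fin k)) (n : ℕ) : ℕ :=
  {M : Finset (ℕ × ℕ) | IsPerfectMatching n M ∧ MatchAvoids σ M ∧ MatchAvoids τ M}.ncard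

/-- `|P_n(τ)|`: the number of `τ`-avoiding set partitions of `[n]`. -/
noncomputable def pcount {k : ℕ} (τ : Equiv.Perm (Fin k)) (n : ℕ) : ℕ :=
  Nat.card {P : Finpartition (Finset.Icc 1 n) // PartAvoids τ P}

/-- `|P_n(σ,τ)|`: the number of set partitions of `[n]` avoiding both `σ` and `τ`. -/
noncomputable def pcount2 {k : ℕ} (σ τ : Equiv.Perm (Fin k)) (n : ℕ) : ℕ :=
  Nat.card {P : Finpartition (Finset.Icc 1 n) // PartAvoids σ P ∧ PartAvoids τ P}

/-- `|S_n(τ)|`: the number of `τ`-avoiding permutations of `[n]`. -/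
noncomputable def scount {k : ℕ} (τ : Equiv.Perm (Fin k)) (n : ℕ) : ℕ :=
  Nat.card {π : Equiv.Perm (Fin n) // PermAvoids τ π}

/-! Read the shape from left to right and match each closer, when it is reached, with an open
opener. A `213`-avoiding matching nests the arcs that open before the opener `q` matched last and
are still open: the earlier they open, the later they close. Hence, if `p` openers before `q` are
still open, then the next closer can only take an open opener preceded by `i` others where
`p ≤ i + 1`, and afterwards `i` plays the role of `p`. The lower Dyck path makes the same choices:
at height `p` just after a south step, it climbs to some height `i + 1 ≥ p` before the next south
step, which leads to height `i`, and it stays weakly below the border of the board precisely when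
`i` is less than the number of open openers. Both objects therefore satisfy the same recursion
along the shape. -/

theorem encard_biUnion_image_of_injOn {ι α β : Type*} {I : Set ι} (hI : I.Finite)
    {f : ι → β → α} {T : ι → Set β}
    (hf : Set.InjOn (Function.uncurry f) {z | z.1 ∈ I ∧ z.2 ∈ T z.1}) :
    (⋃ i ∈ I, f i '' T i).encard = ∑ᶠ i ∈ I, (T i).encard := by
  have hinj {i j : ι} (hi : i ∈ I) (hj : j ∈ I) {a b : β} (ha : a ∈ T i) (hb : b ∈ T j)
      (hab : f i a = f j b) : i = j ∧ a = b :=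
    Prod.mk.inj (hf (show (i, a) ∈ {z : ι × β | _} from ⟨hi, ha⟩)
      (show (j, b) ∈ {z : ι × β | _} from ⟨hj, hb⟩) hab)
  rw [hI.encard_biUnion]
  · exact finsum_mem_congr rfl fun i hi =>
      Set.InjOn.encard_image fun a ha b hb hab => (hinj hi hi ha hb hab).2
  · refine fun i hi j hj hij => Set.disjoint_left.2 ?_
    rintro _ ⟨a, ha, rfl⟩ ⟨b, hb, hba⟩
    exact hij (hinj hj hi hb ha hba).1.symm

theorem replicate_append_cons_inj {α : Type*} {x y : α} (hxy : x ≠ y) {a b : ℕ} {u v : List α} :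
    List.replicate a x ++ y :: u = List.replicate b x ++ y :: v ↔ a = b ∧ u = v := by
  induction a generalizing b with
  | zero => cases b <;> simp [List.replicate_succ, hxy.symm]
  | succ a ih => cases b <;> simp [List.replicate_succ, hxy, ih]

/-! ### Paths below a given path -/

section Paths

variable {p k : ℕ} {T t u : List Bool}

@[simp]
theorem pathHeight_zero (u : List Bool) : pathHeight u 0 = 0 := by simp [pathHeight]

@[simp]
theorem pathHeight_true_cons_succ (u : List Bool) (i : ℕ) :
    pathHeight (true :: u) (i + 1) = pathHeight u i + 1 := by
  simp only [pathHeight, List.take_succ_cons, List.count_cons_self, ne_eq, Bool.true_eq_false,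
    not_false_eq_true, List.count_cons_of_ne]
  push_cast
  ring

@[simp]
theorem pathHeight_false_cons_succ (u : List Bool) (i : ℕ) :
    pathHeight (false :: u) (i + 1) = pathHeight u i - 1 := by
  simp only [pathHeight, List.take_succ_cons, List.count_cons_self, ne_eq, Bool.false_eq_true,
    not_false_eq_true, List.count_cons_of_ne]
  push_cast
  ring

theorem pathHeight_le (u : List Bool) (i : ℕ) : pathHeight u i ≤ i := by
  have := (List.count_le_length (a := true) (l := u.take i)).trans (List.length_take_le i u)
  unfold pathHeight
  omega

theorem pathHeight_replicate_true_append (k : ℕ) (t : List Bool) (j : ℕ) :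
    pathHeight (List.replicate k true ++ t) (k + j) = k + pathHeight t j := by
  induction k with
  | zero => simp
  | succ k ih =>
    rw [List.replicate_succ, List.cons_append, Nat.add_right_comm, pathHeight_true_cons_succ, ih]
    push_cast
    ring

theorem pathHeight_replicate_true_append_of_le {i : ℕ} (h : i ≤ k) (t : List Bool) :
    pathHeight (List.replicate k true ++ t) i = i := by
  simp [pathHeight, List.take_append_of_le_length, List.take_replicate, List.count_replicate, h]

theorem weaklyBelow_replicate_true_append_iff : WeaklyBelow u (List.replicate k true ++ t) ↔
      ∀ j, pathHeight u (k + j) ≤ k + pathHeight t j := by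
  refine ⟨fun h j => pathHeight_replicate_true_append k t j ▸ h (k + j), fun h i => ?_⟩
  rcases le_total i k with hi | hi
  · exact pathHeight_replicate_true_append_of_le hi t ▸ pathHeight_le u i
  · obtain ⟨j, rfl⟩ := Nat.exists_eq_add_of_le hi
    exact pathHeight_replicate_true_append k t j ▸ h j

theorem weaklyBelow_true_cons_iff : WeaklyBelow (true :: u) (true :: t) ↔ WeaklyBelow u t := by
  simp [WeaklyBelow, ← Nat.and_forall_add_one (p := fun i => pathHeight (true :: u) i ≤ _)]

theorem not_weaklyBelow_true_cons_false_cons : ¬ WeaklyBelow (true :: u) (false :: t) := by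
  intro h
  simpa using h 1

theorem weaklyBelow_false_cons_iff :
    WeaklyBelow (false :: u) (List.replicate k true ++ false :: t) ↔
      WeaklyBelow u (List.replicate k true ++ t) := by
  rw [weaklyBelow_replicate_true_append_iff, weaklyBelow_replicate_true_append_iff]
  have hsucc (j : ℕ) : pathHeight (false :: u) (k + (j + 1)) ≤ k + pathHeight (false :: t) (j + 1) ↔
      pathHeight u (k + j) ≤ k + pathHeight t j := by
    rw [← add_assoc, pathHeight_false_cons_succ, pathHeight_false_cons_succ]
    omega
  refine ⟨fun h j => (hsucc j).1 (h (j + 1)), fun h j => ?_⟩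
  cases j with
  | zero => simpa using pathHeight_le (false :: u) k
  | succ j => exact (hsucc j).2 (h j)

/-- The list `u` of steps, started at height `p` above the diagonal, stays weakly above the
diagonal and weakly below the list `T` of steps started at the same vertex, and it has the
same endpoint as `T`. -/
structure IsPathBelow (p : ℕ) (T u : List Bool) : Prop where
  perm : u.Perm T
  nonneg : ∀ i, 0 ≤ p + pathHeight u i
  weaklyBelow : WeaklyBelow u T

theorem isPathBelow_true_cons_iff :
    IsPathBelow p (true :: T) (true :: u) ↔ IsPathBelow (p + 1) T u := by
  have hnonneg : (∀ i, 0 ≤ p + pathHeight (true :: u) i) ↔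
      ∀ i, 0 ≤ ((p + 1 : ℕ) : ℤ) + pathHeight u i := by
    rw [← Nat.and_forall_add_one]
    simp [add_comm, add_left_comm]
  constructor
  · rintro ⟨h₁, h₂, h₃⟩
    exact ⟨h₁.cons_inv, hnonneg.1 h₂, weaklyBelow_true_cons_iff.1 h₃⟩
  · rintro ⟨h₁, h₂, h₃⟩
    exact ⟨h₁.cons true, hnonneg.2 h₂, weaklyBelow_true_cons_iff.2 h₃⟩

theorem isPathBelow_replicate_true_append_iff {a : ℕ} :
    IsPathBelow p (List.replicate a true ++ T) (List.replicate a true ++ u) ↔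
      IsPathBelow (p + a) T u := by
  induction a generalizing p with
  | zero => simp
  | succ a ih =>
    simp only [List.replicate_succ, List.cons_append]
    rw [isPathBelow_true_cons_iff, ih, Nat.add_right_comm, add_assoc]

theorem not_isPathBelow_zero_false_cons : ¬ IsPathBelow 0 T (false :: u) := by
  intro h
  simpa using h.nonneg 1

theorem isPathBelow_false_cons_iff :
    IsPathBelow (p + 1) (List.replicate k true ++ false :: t) (false :: u) ↔
      IsPathBelow p (List.replicate k true ++ t) u := by
  have hperm : (false :: u).Perm (List.replicate k true ++ false :: t) ↔
      u.Perm (List.replicate k true ++ t) := by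
    rw [List.perm_middle.congr_right, List.perm_cons]
  have hnonneg : (∀ i, 0 ≤ ((p + 1 : ℕ) : ℤ) + pathHeight (false :: u) i) ↔
      ∀ i, 0 ≤ p + pathHeight u i := by
    rw [← Nat.and_forall_add_one]
    simp [add_assoc, Int.add_nonneg]
  constructor
  · rintro ⟨h₁, h₂, h₃⟩
    exact ⟨hperm.1 h₁, hnonneg.1 h₂, weaklyBelow_false_cons_iff.1 h₃⟩
  · rintro ⟨h₁, h₂, h₃⟩
    exact ⟨hperm.2 h₁, hnonneg.2 h₂, weaklyBelow_false_cons_iff.2 h₃⟩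

theorem IsPathBelow.exists_eq_replicate_true_append
    (h : IsPathBelow p (List.replicate k true ++ false :: t) u) :
    ∃ a ≤ k, ∃ v, u = List.replicate a true ++ false :: v := by
  obtain ⟨as, v, rfl, has⟩ := List.eq_append_cons_of_mem (h.perm.mem_iff.2 (by simp) : false ∈ u)
  have has' : as = List.replicate as.length true :=
    List.eq_replicate_of_mem fun b hb => by cases b <;> simp_all
  refine ⟨as.length, not_lt.1 fun hlt => ?_, v, by rw [← has']⟩
  obtain ⟨c, hc⟩ := Nat.exists_eq_add_of_lt hlt
  rw [has', hc, add_assoc, List.replicate_add, List.append_assoc,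
    isPathBelow_replicate_true_append_iff] at h
  exact not_weaklyBelow_true_cons_false_cons h.weaklyBelow

/-- The possible continuations of a lower path that has reached height `p`, when the upper path,
at height `p + k`, continues by `t`. Lower and upper path are compared after equally many south
steps, so that the lower path lags `k` east steps behind. -/
def pathsBelow (p k : ℕ) (t : List Bool) : Set (List Bool) :=
  {u | IsPathBelow p (List.replicate k true ++ t) u}

theorem pathsBelow_nil : pathsBelow 0 0 [] = {[]} := by
  ext u
  refine ⟨fun h => List.perm_nil.1 h.perm, ?_⟩
  rintro rfl
  exact ⟨List.Perm.nil, fun i => by simp [pathHeight], fun i => le_rfl⟩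

theorem pathsBelow_true_cons (p k : ℕ) (t : List Bool) :
    pathsBelow p k (true :: t) = pathsBelow p (k + 1) t := by
  simp [pathsBelow, List.replicate_succ']

theorem mem_pathsBelow_false_cons_iff {a b i : ℕ} (h : p + a = i + 1) :
    List.replicate a true ++ false :: u ∈ pathsBelow p (a + b) (false :: t) ↔
      u ∈ pathsBelow i b t := by
  simp only [pathsBelow, Set.mem_ofPred_eq]
  rw [List.replicate_add, List.append_assoc, isPathBelow_replicate_true_append_iff, h,
    isPathBelow_false_cons_iff]

theorem pathsBelow_false_cons (p k : ℕ) (t : List Bool) :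
    pathsBelow p k (false :: t) = ⋃ i ∈ {i | p ≤ i + 1 ∧ i < p + k},
      (fun u => List.replicate (i + 1 - p) true ++ false :: u) ''
        pathsBelow i (p + k - 1 - i) t := by
  ext w
  simp only [Set.mem_ofPred_eq, Set.mem_iUnion, Set.mem_image, exists_prop]
  constructor
  · intro hw
    obtain ⟨a, hak, u, rfl⟩ := IsPathBelow.exists_eq_replicate_true_append hw
    obtain ⟨b, rfl⟩ := Nat.exists_eq_add_of_le hak
    rcases hi : p + a with _ | i
    · obtain ⟨rfl, rfl⟩ := Nat.add_eq_zero_iff.1 hi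
      exact (not_isPathBelow_zero_false_cons hw).elim
    · refine ⟨i, by omega, u, ?_, by rw [← hi, Nat.add_sub_cancel_left]⟩
      rw [show p + (a + b) - 1 - i = b by omega]
      exact (mem_pathsBelow_false_cons_iff hi).1 hw
  · rintro ⟨i, ⟨hpi, hik⟩, u, hu, rfl⟩
    have := (mem_pathsBelow_false_cons_iff (show p + (i + 1 - p) = i + 1 by omega)).2 hu
    rwa [show i + 1 - p + (p + k - 1 - i) = k by omega] at this

theorem encard_pathsBelow_false_cons (p k : ℕ) (t : List Bool) :
    (pathsBelow p k (false :: t)).encard =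
      ∑ᶠ i ∈ {i | p ≤ i + 1 ∧ i < p + k}, (pathsBelow i (p + k - 1 - i) t).encard := by
  rw [pathsBelow_false_cons]
  refine encard_biUnion_image_of_injOn ((Set.finite_lt_nat (p + k)).subset fun i hi => hi.2) ?_
  rintro ⟨i, u⟩ ⟨⟨hi, -⟩, -⟩ ⟨j, v⟩ ⟨⟨hj, -⟩, -⟩ huv
  obtain ⟨hij, rfl⟩ := (replicate_append_cons_inj (by decide)).1 huv
  exact Prod.ext (by dsimp only at hi hj; omega) rfl

theorem isDyckPath_and_weaklyBelow_iff_mem_pathsBelow {n : ℕ} {s t : List Bool}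
    (ht : IsDyckPath n t) : IsDyckPath n s ∧ WeaklyBelow s t ↔ s ∈ pathsBelow 0 0 t := by
  have hperm : s.length = 2 * n ∧ s.count true = n ↔ s.Perm t := by
    rw [List.perm_iff_count, Bool.forall_bool]
    have := List.count_false_add_count_true s
    have := List.count_false_add_count_true t
    have := ht.1
    have := ht.2.1
    omega
  have hnonneg : (∀ i, (s.take i).count false ≤ (s.take i).count true) ↔
      ∀ i, 0 ≤ ((0 : ℕ) : ℤ) + pathHeight s i := by
    simp [pathHeight]
  constructor
  · rintro ⟨⟨h₁, h₂, h₃⟩, h₄⟩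
    exact ⟨hperm.1 ⟨h₁, h₂⟩, hnonneg.1 h₃, h₄⟩
  · rintro ⟨h₁, h₂, h₃⟩
    exact ⟨⟨(hperm.2 h₁).1, (hperm.2 h₁).2, hnonneg.2 h₂⟩, h₃⟩

end Paths

/-! ### Avoidance of `213` by matchings of openers with closers -/

section Matchings

variable {q o x : ℕ} {O C : Finset ℕ} {M : Finset (ℕ × ℕ)}

/-- `M` is a perfect matching of the openers in `O` with the closers in `C`, each opener preceding
its closer. -/
structure IsMatchingOf (O C : Finset ℕ) (M : Finset (ℕ × ℕ)) : Prop where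
  lt : ∀ a ∈ M, a.1 < a.2
  bijOn_fst : Set.BijOn Prod.fst (M : Set (ℕ × ℕ)) O
  bijOn_snd : Set.BijOn Prod.snd (M : Set (ℕ × ℕ)) C

theorem isMatchingOf_empty_right_iff : IsMatchingOf O ∅ M ↔ O = ∅ ∧ M = ∅ := by
  constructor
  · rintro ⟨-, hO, hC⟩
    have hM : M = ∅ := by simpa using hC
    subst hM
    exact ⟨by simpa [Set.bijOn_empty_iff_right] using hO, rfl⟩
  · rintro ⟨rfl, rfl⟩
    exact ⟨by simp, by simp, by simp⟩

theorem isMatchingOf_insert_iff (hox : o < x) (ho : o ∉ O) (hx : x ∉ C) (hM : (o, x) ∉ M) :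
    IsMatchingOf (insert o O) (insert x C) (insert (o, x) M) ↔ IsMatchingOf O C M := by
  have hfst : Set.BijOn Prod.fst (↑(insert (o, x) M) : Set (ℕ × ℕ)) ↑(insert o O : Finset ℕ) ↔
      Set.BijOn Prod.fst (M : Set (ℕ × ℕ)) O := by
    rw [Finset.coe_insert, Finset.coe_insert]
    exact Set.BijOn.insert_iff (f := Prod.fst) (a := (o, x)) hM ho
  have hsnd : Set.BijOn Prod.snd (↑(insert (o, x) M) : Set (ℕ × ℕ)) ↑(insert x C : Finset ℕ) ↔
      Set.BijOn Prod.snd (M : Set (ℕ × ℕ)) C := by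
    rw [Finset.coe_insert, Finset.coe_insert]
    exact Set.BijOn.insert_iff (f := Prod.snd) (a := (o, x)) hM hx
  constructor
  · rintro ⟨h₁, h₂, h₃⟩
    exact ⟨fun a ha => h₁ a (Finset.mem_insert_of_mem ha), hfst.1 h₂, hsnd.1 h₃⟩
  · rintro ⟨h₁, h₂, h₃⟩
    exact ⟨Finset.forall_mem_insert _ _ _ |>.2 ⟨hox, h₁⟩, hfst.2 h₂, hsnd.2 h₃⟩

/-- Of any two arcs of `M` opening before `q`, the one opening first closes last. -/
def NestedBefore (q : ℕ) (M : Finset (ℕ × ℕ)) : Prop :=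
  ∀ a ∈ M, ∀ b ∈ M, a.1 < b.1 → b.1 < q → b.2 ≤ a.2

theorem nestedBefore_zero (M : Finset (ℕ × ℕ)) : NestedBefore 0 M :=
  fun _ _ _ _ _ h => absurd h (Nat.not_lt_zero _)

theorem nestedBefore_insert_iff (hx : ∀ a ∈ M, x < a.2) :
    NestedBefore q (insert (o, x) M) ↔ NestedBefore q M ∧ ∀ a ∈ M, a.1 < q → a.1 ≤ o := by
  simp only [NestedBefore, Finset.forall_mem_insert]
  grind

theorem matchAvoids_p213_iff (hM : ∀ a ∈ M, a.1 < a.2) : MatchAvoids p213 M ↔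
      ∀ a ∈ M, ∀ b ∈ M, ∀ c ∈ M, a.1 < b.1 → b.1 < c.1 → c.2 < a.2 → b.2 ≤ a.2 := by
  constructor
  · intro h a ha b hb c hc hab hbc hca
    by_contra! hba
    refine h ⟨![a.1, b.1, c.1, c.2, a.2, b.2], ?_, ?_⟩
    · rw [Fin.strictMono_iff_lt_succ]
      have := hM c hc
      intro i
      fin_cases i <;> simpa
    · intro i
      fin_cases i
      exacts [ha, hb, hc]
  · rintro h ⟨f, hf, hmem⟩
    have hba : f 5 ≤ f 4 := h _ (hmem 0) _ (hmem 1) _ (hmem 2) (hf (by decide)) (hf (by decide))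
      (hf (by decide))
    exact hba.not_gt (hf (by decide))

theorem matchAvoids_p213_insert_iff (hM : ∀ a ∈ M, a.1 < a.2) (hox : o < x)
    (hx : ∀ a ∈ M, x < a.2) :
    MatchAvoids p213 (insert (o, x) M) ↔ MatchAvoids p213 M ∧ NestedBefore o M := by
  rw [matchAvoids_p213_iff hM,
    matchAvoids_p213_iff (Finset.forall_mem_insert _ _ _ |>.2 ⟨hox, hM⟩)]
  -- As `x` precedes all other closers, `(o, x)` can only be the arc of a pattern opening last.
  simp only [NestedBefore, Finset.forall_mem_insert]
  grind

/-- The `213`-avoiding matchings of the openers in `O` with the closers in `C` whose arcs opening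
before `q` are nested. These are the ways to complete a matching after some of its closers have been
matched, `q` being the opener of the last of them; the nesting condition prevents occurrences of
`213` whose first closer is already matched. -/
def avoidingMatchings (q : ℕ) (O C : Finset ℕ) : Set (Finset (ℕ × ℕ)) :=
  {M | IsMatchingOf O C M ∧ MatchAvoids p213 M ∧ NestedBefore q M}

theorem avoidingMatchings_empty_empty (q : ℕ) : avoidingMatchings q ∅ ∅ = {∅} := by
  ext M
  simp only [avoidingMatchings, isMatchingOf_empty_right_iff, true_and, Set.mem_ofPred_eq,
    Set.mem_singleton_iff, and_iff_left_iff_imp]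
  rintro rfl
  exact ⟨(matchAvoids_p213_iff (by simp)).2 (by simp), by simp [NestedBefore]⟩

theorem insert_mem_avoidingMatchings_iff (hox : o < x) (ho : o ∉ O)
    (hx : ∀ c ∈ C, x < c) (hM : (o, x) ∉ M) :
    insert (o, x) M ∈ avoidingMatchings q (insert o O) (insert x C) ↔
      M ∈ avoidingMatchings o O C ∧ ∀ y ∈ O, y < q → y ≤ o := by
  simp only [avoidingMatchings, Set.mem_ofPred_eq]
  rw [isMatchingOf_insert_iff hox ho (fun h => lt_irrefl x (hx x h)) hM, and_assoc]
  refine and_congr_right fun h => ?_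
  have hclose : ∀ a ∈ M, x < a.2 := fun a ha => hx _ (h.bijOn_snd.mapsTo ha)
  have hopen : (∀ a ∈ M, a.1 < q → a.1 ≤ o) ↔ ∀ y ∈ O, y < q → y ≤ o := by
    refine ⟨fun hle y hy => ?_, fun hle a ha => hle _ (h.bijOn_fst.mapsTo ha)⟩
    obtain ⟨a, ha, rfl⟩ := h.bijOn_fst.surjOn hy
    exact hle a ha
  have hne : ∀ a ∈ M, a.1 ≠ o := fun a ha hao => ho (hao ▸ h.bijOn_fst.mapsTo ha)
  rw [matchAvoids_p213_insert_iff h.lt hox hclose, nestedBefore_insert_iff hclose, hopen]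
  have hmono (h₁ : ∀ y ∈ O, y < q → y ≤ o) (h₂ : NestedBefore o M) : NestedBefore q M :=
    fun a ha b hb hab hbq => h₂ a ha b hb hab
      ((hopen.2 h₁ b hb hbq).lt_of_ne (hne b hb))
  tauto

theorem notMem_of_mem_avoidingMatchings (hM : M ∈ avoidingMatchings q O C)
    (hx : x ∉ C) : (o, x) ∉ M :=
  fun h => hx (hM.1.bijOn_snd.mapsTo h)

theorem avoidingMatchings_insert_right (hx : ∀ c ∈ C, x < c) :
    avoidingMatchings q O (insert x C) =
      ⋃ o ∈ {o | o ∈ O ∧ o < x ∧ ∀ y ∈ O, y < q → y ≤ o},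
        insert (o, x) '' avoidingMatchings o (O.erase o) C := by
  have hforall {o : ℕ} (ho : o ∈ O) :
      (∀ y ∈ O.erase o, y < q → y ≤ o) ↔ ∀ y ∈ O, y < q → y ≤ o := by
    rw [← Finset.insert_erase ho, Finset.forall_mem_insert, Finset.erase_insert_eq_erase]
    simp
  ext M
  simp only [Set.mem_ofPred_eq, Set.mem_iUnion, Set.mem_image, exists_prop]
  constructor
  · intro hM
    obtain ⟨o, hoM⟩ : ∃ o, (o, x) ∈ M := by
      simpa using hM.1.bijOn_snd.surjOn (Finset.mem_insert_self x C)
    have hoO : o ∈ O := hM.1.bijOn_fst.mapsTo hoM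
    have hox : o < x := hM.1.lt _ hoM
    rw [← Finset.insert_erase hoO, ← Finset.insert_erase hoM, insert_mem_avoidingMatchings_iff hox
      (Finset.notMem_erase o O) hx (Finset.notMem_erase _ M), hforall hoO] at hM
    exact ⟨o, ⟨hoO, hox, hM.2⟩, M.erase (o, x), hM.1, Finset.insert_erase hoM⟩
  · rintro ⟨o, ⟨hoO, hox, ho⟩, M, hM, rfl⟩
    have hoM : (o, x) ∉ M := notMem_of_mem_avoidingMatchings hM fun h => lt_irrefl x (hx x h)
    nth_rw 1 [← Finset.insert_erase hoO]
    exact (insert_mem_avoidingMatchings_iff hox (Finset.notMem_erase o O) hx hoM).2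
      ⟨hM, (hforall hoO).2 ho⟩

theorem encard_avoidingMatchings_insert_right (hx : ∀ c ∈ C, x < c) :
    (avoidingMatchings q O (insert x C)).encard =
      ∑ᶠ o ∈ {o | o ∈ O ∧ o < x ∧ ∀ y ∈ O, y < q → y ≤ o},
        (avoidingMatchings o (O.erase o) C).encard := by
  rw [avoidingMatchings_insert_right hx]
  refine encard_biUnion_image_of_injOn (O.finite_toSet.subset fun o ho => ho.1) ?_
  have hxC : x ∉ C := fun h => lt_irrefl x (hx x h)
  rintro ⟨o, M⟩ ⟨-, hM⟩ ⟨o', M'⟩ ⟨-, hM'⟩ heq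
  have hnotM (y : ℕ) : (y, x) ∉ M := notMem_of_mem_avoidingMatchings hM hxC
  have hnotM' (y : ℕ) : (y, x) ∉ M' := notMem_of_mem_avoidingMatchings hM' hxC
  change insert (o, x) M = insert (o', x) M' at heq
  obtain rfl : o = o' := by
    have : (o, x) ∈ insert (o', x) M' := heq ▸ Finset.mem_insert_self _ M
    simpa [hnotM'] using this
  have hMM' : M = M' := by
    rw [← Finset.erase_insert (hnotM o), heq, Finset.erase_insert (hnotM' o)]
  rw [hMM']

end Matchings

/-! ### The common recursion -/

theorem exists_count_eq_of_lt_count {P : ℕ → Prop} [DecidablePred P] {i x : ℕ}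
    (hi : i < Nat.count P x) : ∃ o, P o ∧ o < x ∧ Nat.count P o = i :=
  have hcard hf := hi.trans_le (Nat.count_le_card hf x)
  ⟨Nat.nth P i, Nat.nth_mem i hcard, Nat.nth_lt_of_lt_count hi, Nat.count_nth hcard⟩

theorem forall_lt_imp_le_iff_count_le {P : ℕ → Prop} [DecidablePred P] {o q : ℕ} (ho : P o) :
    (∀ y, P y → y < q → y ≤ o) ↔ Nat.count P q ≤ Nat.count P o + 1 := by
  rw [← Nat.count_succ_eq_succ_count_iff.2 ho]
  constructor
  · intro h
    by_contra! hlt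
    obtain ⟨y, ⟨hoy, hyq⟩, hy⟩ := Nat.exists_of_count_lt_count hlt
    exact (h y hy hyq).not_gt hoy
  · intro h y hy hyq
    by_contra! hoy
    exact h.not_gt ((Nat.count_monotone P hoy).trans_lt (Nat.count_strict_mono hy hyq))

theorem bijOn_count {P : ℕ → Prop} [DecidablePred P] (q x : ℕ) :
    Set.BijOn (Nat.count P) {o | P o ∧ o < x ∧ ∀ y, P y → y < q → y ≤ o}
      {i | Nat.count P q ≤ i + 1 ∧ i < Nat.count P x} := by
  refine ⟨?_, ?_, ?_⟩
  · exact fun o ⟨ho, hox, hoq⟩ =>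
      ⟨(forall_lt_imp_le_iff_count_le ho).1 hoq, Nat.count_strict_mono ho hox⟩
  · exact fun o ho o' ho' => Nat.count_injective ho.1 ho'.1
  · rintro i ⟨hiq, hix⟩
    obtain ⟨o, ho, hox, rfl⟩ := exists_count_eq_of_lt_count hix
    exact ⟨o, ⟨ho, hox, (forall_lt_imp_le_iff_count_le ho).2 hiq⟩, rfl⟩

theorem count_mem_erase_of_le {O : Finset ℕ} {o q : ℕ} (h : q ≤ o) :
    Nat.count (· ∈ O.erase o) q = Nat.count (· ∈ O) q := by
  apply le_antisymm <;> refine Nat.count_mono_left fun y hy hmem => ?_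
  · exact Finset.mem_of_mem_erase hmem
  · exact Finset.mem_erase.2 ⟨by omega, hmem⟩

theorem count_mem_erase_add_one {O : Finset ℕ} {o x : ℕ} (ho : o ∈ O) (hox : o < x) :
    Nat.count (· ∈ O.erase o) x + 1 = Nat.count (· ∈ O) x := by
  rw [Nat.count_eq_card_filter_range, Nat.count_eq_card_filter_range, ← Finset.card_erase_add_one
    (Finset.mem_filter.2 ⟨Finset.mem_range.2 hox, ho⟩)]
  congr 2
  ext y
  simp only [Finset.mem_filter, Finset.mem_erase]
  tauto

/-- From the vertex `x` on, the openers in `O` and the closers in `C` are listed by the steps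
of `t`, and no closer in `C` precedes `x`. -/
structure IsShapeFrom (x : ℕ) (t : List Bool) (O C : Finset ℕ) : Prop where
  mem_openers_iff : ∀ i, x + i ∈ O ↔ t[i]? = some true
  mem_closers_iff : ∀ i, x + i ∈ C ↔ t[i]? = some false
  le_of_mem_closers : ∀ c ∈ C, x ≤ c

namespace IsShapeFrom

variable {x : ℕ} {t : List Bool} {O C : Finset ℕ}

theorem closers_eq_empty (h : IsShapeFrom x [] O C) : C = ∅ := by
  refine Finset.eq_empty_of_forall_notMem fun c hc => ?_
  obtain ⟨i, rfl⟩ := Nat.exists_eq_add_of_le (h.le_of_mem_closers c hc)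
  simpa using (h.mem_closers_iff i).1 hc

theorem openers_eq_empty (h : IsShapeFrom x [] O C) (hx : Nat.count (· ∈ O) x = 0) : O = ∅ := by
  refine Finset.eq_empty_of_forall_notMem fun o ho => ?_
  obtain hox | hxo := lt_or_ge o x
  · exact Nat.count_iff_forall_not.1 hx o hox ho
  · obtain ⟨i, rfl⟩ := Nat.exists_eq_add_of_le hxo
    simpa using (h.mem_openers_iff i).1 ho

theorem mem_openers (h : IsShapeFrom x (true :: t) O C) : x ∈ O := by
  simpa using h.mem_openers_iff 0

theorem mem_closers (h : IsShapeFrom x (false :: t) O C) : x ∈ C := by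
  simpa using h.mem_closers_iff 0

theorem notMem_openers (h : IsShapeFrom x (false :: t) O C) : x ∉ O := by
  simpa using h.mem_openers_iff 0

theorem lt_of_mem_erase_closers (h : IsShapeFrom x t O C) {c : ℕ} (hc : c ∈ C.erase x) : x < c :=
  (h.le_of_mem_closers c (Finset.mem_of_mem_erase hc)).lt_of_ne (Finset.ne_of_mem_erase hc).symm

theorem of_true_cons (h : IsShapeFrom x (true :: t) O C) : IsShapeFrom (x + 1) t O C where
  mem_openers_iff i := by simpa [add_assoc, add_comm 1] using h.mem_openers_iff (i + 1)
  mem_closers_iff i := by simpa [add_assoc, add_comm 1] using h.mem_closers_iff (i + 1)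
  le_of_mem_closers c hc := by
    have hx : x ∉ C := by simpa using h.mem_closers_iff 0
    exact (h.le_of_mem_closers c hc).lt_of_ne fun hxc => hx (hxc ▸ hc)

theorem of_false_cons (h : IsShapeFrom x (false :: t) O C) {o : ℕ} (ho : o < x) :
    IsShapeFrom (x + 1) t (O.erase o) (C.erase x) where
  mem_openers_iff i := by
    rw [Finset.mem_erase, and_iff_right (by omega)]
    simpa [add_assoc, add_comm 1] using h.mem_openers_iff (i + 1)
  mem_closers_iff i := by
    rw [Finset.mem_erase, and_iff_right (by omega)]
    simpa [add_assoc, add_comm 1] using h.mem_closers_iff (i + 1)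
  le_of_mem_closers _ hc := h.lt_of_mem_erase_closers hc

end IsShapeFrom

theorem encard_avoidingMatchings_eq_encard_pathsBelow {t : List Bool} {q x k : ℕ}
    {O C : Finset ℕ} (h : IsShapeFrom x t O C)
    (hk : Nat.count (· ∈ O) x = Nat.count (· ∈ O) q + k)
    (hbal : Nat.count (· ∈ O) x + t.count true = t.count false) :
    (avoidingMatchings q O C).encard = (pathsBelow (Nat.count (· ∈ O) q) k t).encard := by
  induction t generalizing q x k O C with
  | nil =>
    have hx : Nat.count (· ∈ O) x = 0 := by simpa using hbal
    obtain ⟨hq, rfl⟩ := Nat.add_eq_zero_iff.1 (hk.symm.trans hx)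
    rw [h.closers_eq_empty, hq, h.openers_eq_empty hx, avoidingMatchings_empty_empty,
      pathsBelow_nil, Set.encard_singleton, Set.encard_singleton]
  | cons b t ih =>
    cases b with
    | true =>
      have hcount : Nat.count (· ∈ O) (x + 1) = Nat.count (· ∈ O) x + 1 :=
        Nat.count_succ_eq_succ_count_iff.2 h.mem_openers
      rw [pathsBelow_true_cons]
      refine ih h.of_true_cons (by omega) ?_
      simp only [List.count_cons_self, ne_eq, Bool.true_eq_false, not_false_eq_true,
        List.count_cons_of_ne] at hbal
      omega
    | false =>
      rw [← Finset.insert_erase h.mem_closers, encard_avoidingMatchings_insert_right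
        fun _ => h.lt_of_mem_erase_closers, encard_pathsBelow_false_cons, ← hk]
      refine finsum_mem_eq_of_bijOn _ (bijOn_count q x) fun o ⟨ho, hox, _⟩ => ?_
      have hrank : Nat.count (· ∈ O.erase o) o = Nat.count (· ∈ O) o :=
        count_mem_erase_of_le le_rfl
      have herase : Nat.count (· ∈ O.erase o) x + 1 = Nat.count (· ∈ O) x :=
        count_mem_erase_add_one ho hox
      have hcount : Nat.count (· ∈ O.erase o) (x + 1) = Nat.count (· ∈ O.erase o) x :=
        Nat.count_succ_eq_count_iff.2 fun hx => h.notMem_openers (Finset.mem_of_mem_erase hx)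
      have hlt : Nat.count (· ∈ O) o < Nat.count (· ∈ O) x := Nat.count_strict_mono ho hox
      rw [← hrank]
      refine ih (h.of_false_cons hox) (by omega) ?_
      simp only [List.count_cons_self, ne_eq, Bool.false_eq_true, not_false_eq_true,
        List.count_cons_of_ne] at hbal
      omega

/-! ### Perfect matchings of a given shape -/

/-- The positions, in `{1, …, 2n}`, of the steps `b` of a path `t` of length `2n`: the openers
(`b = true`) or closers (`b = false`) of a matching of shape `t`. -/
def stepPositions (b : Bool) (t : List Bool) : Finset ℕ :=
  {x ∈ Finset.Icc 1 t.length | t[x - 1]? = some b}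

theorem one_add_mem_stepPositions_iff {b : Bool} {t : List Bool} {i : ℕ} :
    1 + i ∈ stepPositions b t ↔ t[i]? = some b := by
  simp only [stepPositions, Finset.mem_filter, Finset.mem_Icc, Nat.add_sub_cancel_left,
    and_iff_right_iff_imp]
  intro h
  have := (List.getElem?_eq_some_iff.1 h).1
  omega

theorem sdiff_stepPositions_true (t : List Bool) :
    Finset.Icc 1 t.length \ stepPositions true t = stepPositions false t := by
  rw [stepPositions, ← Finset.filter_not]
  refine Finset.filter_congr fun x hx => ?_
  have hlt : x - 1 < t.length := by have := Finset.mem_Icc.1 hx; omega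
  simp [List.getElem?_eq_getElem hlt]

theorem isShapeFrom_one_stepPositions (t : List Bool) :
    IsShapeFrom 1 t (stepPositions true t) (stepPositions false t) where
  mem_openers_iff _ := one_add_mem_stepPositions_iff
  mem_closers_iff _ := one_add_mem_stepPositions_iff
  le_of_mem_closers _ hc := (Finset.mem_Icc.1 (Finset.mem_filter.1 hc).1).1

theorem IsPerfectMatching.eq_of_mem {n x : ℕ} {M : Finset (ℕ × ℕ)} (h : IsPerfectMatching n M)
    {a b : ℕ × ℕ} (ha : a ∈ M) (hb : b ∈ M) (hax : a.1 = x ∨ a.2 = x) (hbx : b.1 = x ∨ b.2 = x) :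
    a = b := by
  have := h.1 a ha
  exact (h.2 x (by omega) (by omega)).unique ⟨ha, hax⟩ ⟨hb, hbx⟩

theorem IsPerfectMatching.image_fst_subset {n : ℕ} {M : Finset (ℕ × ℕ)}
    (h : IsPerfectMatching n M) : M.image Prod.fst ⊆ Finset.Icc 1 (2 * n) := by
  refine Finset.image_subset_iff.2 fun a ha => Finset.mem_Icc.2 ?_
  have := h.1 a ha
  omega

theorem IsPerfectMatching.isMatchingOf {n : ℕ} {M : Finset (ℕ × ℕ)} (h : IsPerfectMatching n M) :
    IsMatchingOf (M.image Prod.fst) (Finset.Icc 1 (2 * n) \ M.image Prod.fst) M where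
  lt a ha := (h.1 a ha).1
  bijOn_fst := by
    rw [Finset.coe_image]
    exact Set.InjOn.bijOn_image fun a ha b hb hab => h.eq_of_mem ha hb (.inl hab) (.inl rfl)
  bijOn_snd := by
    refine ⟨fun a ha => ?_, fun a ha b hb hab => h.eq_of_mem ha hb (.inr hab) (.inr rfl), ?_⟩
    · have := h.1 a ha
      simp only [Finset.coe_sdiff, Set.mem_sdiff, Finset.mem_coe, Finset.mem_Icc, Finset.mem_image]
      refine ⟨by omega, ?_⟩
      rintro ⟨b, hb, hba⟩
      obtain rfl : a = b := h.eq_of_mem ha hb (.inr rfl) (.inl hba)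
      omega
    · intro c hc
      simp only [Finset.coe_sdiff, Set.mem_sdiff, Finset.mem_coe, Finset.mem_Icc] at hc
      obtain ⟨a, ⟨ha, hac | hac⟩, -⟩ := h.2 c hc.1.1 hc.1.2
      · exact (hc.2 (Finset.mem_image.2 ⟨a, ha, hac⟩)).elim
      · exact ⟨a, ha, hac⟩

theorem IsMatchingOf.isPerfectMatching {n : ℕ} {O : Finset ℕ} {M : Finset (ℕ × ℕ)}
    (h : IsMatchingOf O (Finset.Icc 1 (2 * n) \ O) M) (hO : O ⊆ Finset.Icc 1 (2 * n)) :
    IsPerfectMatching n M := by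
  have hfst {a : ℕ × ℕ} (ha : a ∈ M) : a.1 ∈ O := h.bijOn_fst.mapsTo ha
  have hsnd {a : ℕ × ℕ} (ha : a ∈ M) : a.2 ∈ Finset.Icc 1 (2 * n) ∧ a.2 ∉ O :=
    Finset.mem_sdiff.1 (h.bijOn_snd.mapsTo ha)
  refine ⟨fun a ha => ⟨h.lt a ha, (Finset.mem_Icc.1 (hO (hfst ha))).1,
    (Finset.mem_Icc.1 (hsnd ha).1).2⟩, fun x hx₁ hx₂ => ?_⟩
  by_cases hx : x ∈ O
  · obtain ⟨a, ha, rfl⟩ := h.bijOn_fst.surjOn hx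
    refine ⟨a, ⟨ha, .inl rfl⟩, ?_⟩
    rintro b ⟨hb, hba | hba⟩
    · exact h.bijOn_fst.injOn hb ha hba
    · exact ((hsnd hb).2 (hba ▸ hx)).elim
  · obtain ⟨a, ha, rfl⟩ := h.bijOn_snd.surjOn
      (Finset.mem_sdiff.2 ⟨Finset.mem_Icc.2 ⟨hx₁, hx₂⟩, hx⟩)
    refine ⟨a, ⟨ha, .inr rfl⟩, ?_⟩
    rintro b ⟨hb, hba | hba⟩
    · exact (hx (hba ▸ hfst hb)).elim
    · exact h.bijOn_snd.injOn hb ha hba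

theorem shapeOf_eq_iff {n : ℕ} {t : List Bool} {M : Finset (ℕ × ℕ)} (ht : t.length = 2 * n)
    (hM : M.image Prod.fst ⊆ Finset.Icc 1 (2 * n)) :
    shapeOf n M = t ↔ M.image Prod.fst = stepPositions true t := by
  have hget {i : ℕ} (hi : i < 2 * n) :
      (shapeOf n M)[i]? = some (decide (1 + i ∈ M.image Prod.fst)) := by
    rw [shapeOf, List.getElem?_map, List.getElem?_range hi, add_comm 1 i, Option.map_some]
  constructor
  · rintro rfl
    rw [stepPositions, ht, ← Finset.inter_eq_right.2 hM, ← Finset.filter_mem_eq_inter]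
    refine Finset.filter_congr fun x hx => ?_
    obtain ⟨i, rfl⟩ := Nat.exists_eq_add_of_le (Finset.mem_Icc.1 hx).1
    have hi : i < 2 * n := by have := Finset.mem_Icc.1 hx; omega
    rw [Nat.add_sub_cancel_left, hget hi]
    simp
  · intro h
    refine List.ext_getElem? fun i => ?_
    rcases lt_or_ge i (2 * n) with hi | hi
    · simp only [hget hi, h, one_add_mem_stepPositions_iff]
      rw [List.getElem?_eq_getElem (ht ▸ hi)]
      simp
    · rw [List.getElem?_eq_none (by simpa [shapeOf] using hi), List.getElem?_eq_none (ht ▸ hi)]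

theorem isPerfectMatching_and_shapeOf_eq_iff {n : ℕ} {t : List Bool} {M : Finset (ℕ × ℕ)}
    (ht : t.length = 2 * n) : IsPerfectMatching n M ∧ shapeOf n M = t ↔
      IsMatchingOf (stepPositions true t) (stepPositions false t) M := by
  rw [← sdiff_stepPositions_true, ht]
  constructor
  · rintro ⟨hM, hshape⟩
    rw [← (shapeOf_eq_iff ht hM.image_fst_subset).1 hshape]
    exact hM.isMatchingOf
  · intro h
    have hsub : stepPositions true t ⊆ Finset.Icc 1 (2 * n) := ht ▸ Finset.filter_subset _ _
    have himage : M.image Prod.fst = stepPositions true t :=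
      Finset.coe_injective (by rw [Finset.coe_image, h.bijOn_fst.image_eq])
    exact ⟨h.isPerfectMatching hsub, (shapeOf_eq_iff ht (himage ▸ hsub)).2 himage⟩

/-- For every positive `n` and every Ferrers board `F ∈ F_n`
(given by its border Dyck path `t`), the number of `213`-avoiding perfect matchings
of shape `F` equals the number of Dyck paths of semilength `n` lying weakly below `t`. -/
theorem card_matchings213_of_shape_eq_card_paths_below
    (n : ℕ) (hn : 0 < n) (t : List Bool) (ht : IsDyckPath n t) :
    {M : Finset (ℕ × ℕ) | IsPerfectMatching n M ∧ MatchAvoids p213 M ∧ shapeOf n M = t}.ncard =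
    {s : List Bool | IsDyckPath n s ∧ WeaklyBelow s t}.ncard := by
  have hmatchings :
      {M : Finset (ℕ × ℕ) | IsPerfectMatching n M ∧ MatchAvoids p213 M ∧ shapeOf n M = t} =
        avoidingMatchings 0 (stepPositions true t) (stepPositions false t) := by
    ext M
    simp only [avoidingMatchings, ← isPerfectMatching_and_shapeOf_eq_iff ht.1, nestedBefore_zero,
      Set.mem_ofPred_eq, and_true]
    tauto
  have hpaths : {s | IsDyckPath n s ∧ WeaklyBelow s t} = pathsBelow 0 0 t :=
    Set.ext fun _ => isDyckPath_and_weaklyBelow_iff_mem_pathsBelow ht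
  have hcount : Nat.count (· ∈ stepPositions true t) 1 = 0 := by
    simp [Nat.count_succ, stepPositions]
  have hbal : t.count true = t.count false := by
    have := List.count_true_add_count_false t
    have := ht.1
    have := ht.2.1
    omega
  rw [hmatchings, hpaths, Set.ncard_def, Set.ncard_def,
    encard_avoidingMatchings_eq_encard_pathsBelow (k := 0) (isShapeFrom_one_stepPositions t)
      (by rw [hcount, Nat.count_zero]) (by rw [hcount, hbal, Nat.zero_add]), Nat.count_zero]
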